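/- arXiv:1301.2346 — 3 statements merged into one kernel-verified Lean document; each statement's English description precedes it below -/
import Mathlib

section
/- Let X be a reflexive Banach space, let τ ∈ ℝ, and let 1 ≤ p₁ < ∞ and 1 < p₂ ≤ ∞. Suppose f : [τ,∞) → X is locally absolutely continuous with almost-everywhere derivative f_t, that f ∈ L^{p₁}(τ,∞;X) (i.e. ∫_τ^∞ ‖f(s)‖_X^{p₁} ds < ∞), and that f_t is translation bounded in L^{p₂}, i.e. sup_{t ≥ τ} (∫_t^{t+1} ‖f_t(s)‖_X^{p₂} ds)^{1/p₂} < ∞ (essential supremum norm on each interval when p₂ = ∞). Then ‖f(t)‖_X → 0 as t → ∞. -/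
open MeasureTheory Set Filter
open scoped ENNReal

/-! By Hölder's inequality the translation bound on `f'` makes `f` Hölder continuous of exponent
`1 - 1/p₂ > 0`, with the same constant on every window of length one, hence uniformly continuous.
As in Barbalat's lemma, a uniformly continuous `f` can satisfy `‖f t‖ ≥ ε` only if `‖f‖` stays
above `ε / 2` on `(t, t + δ]`, with `δ` independent of `t`, and this window then carries a fixed
amount of the integral of `‖f‖ ^ p₁`. Since the tails of that integral vanish, this is impossible
for large `t`. -/

section LIntegral

open scoped Topology

variable {α : Type*} [MeasurableSpace α] {μ : Measure α}

theorem exists_lt_of_setLIntegral_lt_mul {g : α → ℝ≥0∞} {s : Set α} {c : ℝ≥0∞}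
    (hs : MeasurableSet s) (h : ∫⁻ x in s, g x ∂μ < c * μ s) : ∃ x ∈ s, g x < c := by
  contrapose! h
  rw [← setLIntegral_const]
  exact setLIntegral_mono' hs h

theorem tendsto_setLIntegral_Ioi_atTop_zero [LinearOrder α]
    [(atTop : Filter α).IsCountablyGenerated] [TopologicalSpace α] [OrderClosedTopology α]
    [OpensMeasurableSpace α] {g : α → ℝ≥0∞} {a : α} (hg : ∫⁻ x in Ioi a, g x ∂μ ≠ ∞) :
    Tendsto (fun t => ∫⁻ x in Ioi t, g x ∂μ) atTop (𝓝 0) := by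
  have : Nonempty α := ⟨a⟩
  have hinter : ⋂ t : α, Ioi t = ∅ :=
    eq_empty_of_forall_notMem fun x hx => lt_irrefl x (mem_iInter.1 hx x)
  have htail := tendsto_measure_iInter_atTop (μ := μ.withDensity g) (s := fun t : α => Ioi t)
    (fun _ => measurableSet_Ioi.nullMeasurableSet) (fun _ _ => Ioi_subset_Ioi)
    ⟨a, by rwa [withDensity_apply _ measurableSet_Ioi]⟩
  simpa only [hinter, measure_empty, Function.comp_def,
    withDensity_apply _ measurableSet_Ioi] using htail

theorem enorm_setIntegral_le_eLpNorm_mul_rpow {E : Type*} [NormedAddCommGroup E] [NormedSpace ℝ E]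
    {g : α → E} {s : Set α} {p : ℝ≥0∞} (hp : 1 ≤ p) (hg : AEStronglyMeasurable g (μ.restrict s)) :
    ‖∫ x in s, g x ∂μ‖ₑ ≤ eLpNorm g p (μ.restrict s) * μ s ^ (1 - p⁻¹).toReal := by
  have hexp : 1 / (1 : ℝ≥0∞).toReal - 1 / p.toReal = (1 - p⁻¹).toReal := by
    rw [ENNReal.toReal_sub_of_le (ENNReal.inv_le_one.2 hp) ENNReal.one_ne_top, ENNReal.toReal_inv]
    simp
  calc ‖∫ x in s, g x ∂μ‖ₑ ≤ ∫⁻ x in s, ‖g x‖ₑ ∂μ := enorm_integral_le_lintegral_enorm _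
    _ = eLpNorm g 1 (μ.restrict s) := eLpNorm_one_eq_lintegral_enorm.symm
    _ ≤ eLpNorm g p (μ.restrict s) * μ s ^ (1 - p⁻¹).toReal := by
      simpa only [hexp, Measure.restrict_apply_univ] using
        eLpNorm_le_eLpNorm_mul_rpow_measure_univ hp hg

end LIntegral

section UniformContinuity

open scoped Topology NNReal

theorem uniformContinuousOn_Ici_of_holderOnWith_Icc {Y : Type*} [PseudoEMetricSpace Y]
    {f : ℝ → Y} {C r : ℝ≥0} {τ : ℝ} (hr : 0 < r)
    (hf : ∀ t, τ ≤ t → HolderOnWith C r f (Icc t (t + 1))) :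
    UniformContinuousOn f (Ici τ) := by
  refine EMetric.uniformContinuousOn_iff.2 fun ε hε => ?_
  have hmod : Tendsto (fun δ : ℝ≥0∞ => C * δ ^ (r : ℝ)) (𝓝[>] 0) (𝓝 0) := by
    have hcont : Continuous fun δ : ℝ≥0∞ => C * δ ^ (r : ℝ) :=
      (ENNReal.continuous_const_mul ENNReal.coe_ne_top).comp ENNReal.continuous_rpow_const
    simpa [hr] using (hcont.tendsto 0).mono_left nhdsWithin_le_nhds
  obtain ⟨δ, hδε, hδ0, hδ1⟩ :=
    ((hmod.eventually_lt_const hε).and (Ioc_mem_nhdsGT one_pos)).exists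
  refine ⟨δ, hδ0, fun {x} hx {y} hy hxy => ?_⟩
  have habs : |x - y| ≤ 1 := by
    rw [← Real.dist_eq, ← ENNReal.ofReal_le_one, ← edist_dist]
    exact hxy.le.trans hδ1
  have hwindow : x ∈ Icc (min x y) (min x y + 1) ∧ y ∈ Icc (min x y) (min x y + 1) := by
    grind
  calc edist (f x) (f y) ≤ C * edist x y ^ (r : ℝ) :=
        hf _ (le_min hx hy) x hwindow.1 y hwindow.2
    _ ≤ C * δ ^ (r : ℝ) := by gcongr
    _ < ε := hδε

theorem tendsto_atTop_zero_of_uniformContinuousOn_of_lintegral_rpow_ne_top {E : Type*}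
    [SeminormedAddCommGroup E] {f : ℝ → E} {τ p : ℝ} (hf : UniformContinuousOn f (Ici τ))
    (hp : 0 < p) (hint : ∫⁻ s in Ioi τ, ‖f s‖ₑ ^ p ≠ ∞) :
    Tendsto f atTop (𝓝 0) := by
  refine NormedAddGroup.tendsto_nhds_zero.2 fun ε hε => ?_
  obtain ⟨δ, hδ, hclose⟩ := Metric.uniformContinuousOn_iff_le.1 hf (ε / 2) (half_pos hε)
  have hpos : 0 < ENNReal.ofReal (ε / 2) ^ p * ENNReal.ofReal δ := by positivity
  filter_upwards [eventually_ge_atTop τ,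
    (tendsto_setLIntegral_Ioi_atTop_zero hint).eventually_lt_const hpos] with t ht htail
  have hwindow : ∫⁻ s in Ioc t (t + δ), ‖f s‖ₑ ^ p <
      ENNReal.ofReal (ε / 2) ^ p * volume (Ioc t (t + δ)) := by
    rw [Real.volume_Ioc, add_sub_cancel_left]
    exact (lintegral_mono_set Ioc_subset_Ioi_self).trans_lt htail
  obtain ⟨s, hs, hfs⟩ := exists_lt_of_setLIntegral_lt_mul measurableSet_Ioc hwindow
  have hfs : ‖f s‖ < ε / 2 := by
    rwa [ENNReal.rpow_lt_rpow_iff hp, ← ofReal_norm,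
      ENNReal.ofReal_lt_ofReal_iff (half_pos hε)] at hfs
  have hts : dist t s ≤ δ := by
    rw [dist_comm, Real.dist_eq, abs_of_pos (sub_pos.2 hs.1)]
    linarith [hs.2]
  have hfts : ‖f t - f s‖ ≤ ε / 2 := by
    rw [← dist_eq_norm]
    exact hclose t ht s (ht.trans hs.1.le) hts
  calc ‖f t‖ ≤ ‖f t - f s‖ + ‖f s‖ := norm_le_norm_sub_add _ _
    _ < ε / 2 + ε / 2 := add_lt_add_of_le_of_lt hfts hfs
    _ = ε := add_halves ε

end UniformContinuity

section TranslationBounded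

open scoped Topology NNReal

variable {E : Type*} [NormedAddCommGroup E]

/-- Translation boundedness in `L^p` on `[τ, ∞)`, the defining bound of `L^p_tb(τ, ∞; E)`: the
`L^p` seminorms over unit windows are bounded. Measurability of `g` is not included. -/
def IsTranslationBounded (g : ℝ → E) (p : ℝ≥0∞) (τ : ℝ) : Prop :=
  ∃ C : ℝ≥0∞, C < ∞ ∧ ∀ t : ℝ, τ ≤ t → eLpNorm g p (volume.restrict (Ioc t (t + 1))) ≤ C

variable [NormedSpace ℝ E] {f f' : ℝ → E} {p : ℝ≥0∞}

theorem holderOnWith_Icc_of_eLpNorm_deriv_le {a b : ℝ} {C : ℝ≥0} (hp : 1 ≤ p)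
    (hf' : AEStronglyMeasurable f' (volume.restrict (Ioc a b)))
    (hf : ∀ x y : ℝ, a ≤ x → x ≤ y → y ≤ b → f y - f x = ∫ s in x..y, f' s)
    (hC : eLpNorm f' p (volume.restrict (Ioc a b)) ≤ C) :
    HolderOnWith C (1 - p⁻¹).toNNReal f (Icc a b) := by
  intro x hx y hy
  wlog hxy : x ≤ y generalizing x y
  · simpa only [edist_comm] using this y hy x hx (le_of_not_ge hxy)
  have hrestrict : volume.restrict (Ioc x y) ≤ volume.restrict (Ioc a b) :=
    Measure.restrict_mono (Ioc_subset_Ioc hx.1 hy.2) le_rfl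
  calc edist (f x) (f y) = ‖∫ s in Ioc x y, f' s‖ₑ := by
        rw [edist_comm, edist_eq_enorm_sub, hf x y hx.1 hxy hy.2,
          intervalIntegral.integral_of_le hxy]
    _ ≤ eLpNorm f' p (volume.restrict (Ioc x y)) * volume (Ioc x y) ^ (1 - p⁻¹).toReal :=
      enorm_setIntegral_le_eLpNorm_mul_rpow hp (hf'.mono_measure hrestrict)
    _ ≤ C * edist x y ^ (1 - p⁻¹).toReal := by
      rw [edist_comm, edist_dist, Real.dist_eq, abs_of_nonneg (sub_nonneg.2 hxy), Real.volume_Ioc]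
      gcongr
      exact (eLpNorm_mono_measure _ hrestrict).trans hC

theorem uniformContinuousOn_Ici_of_isTranslationBounded_deriv {τ : ℝ} (hp : 1 < p)
    (hf'int : ∀ a b : ℝ, τ ≤ a → a ≤ b → IntervalIntegrable f' volume a b)
    (hAC : ∀ a b : ℝ, τ ≤ a → a ≤ b → f b - f a = ∫ s in a..b, f' s)
    (hf' : IsTranslationBounded f' p τ) :
    UniformContinuousOn f (Ici τ) := by
  obtain ⟨C, hC, hbound⟩ := hf'
  lift C to ℝ≥0 using hC.ne
  have hexp : 0 < (1 - p⁻¹).toNNReal :=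
    ENNReal.toNNReal_pos (tsub_pos_of_lt (ENNReal.inv_lt_one.2 hp)).ne'
      (ENNReal.sub_ne_top ENNReal.one_ne_top)
  refine uniformContinuousOn_Ici_of_holderOnWith_Icc (C := C) hexp fun t ht => ?_
  exact holderOnWith_Icc_of_eLpNorm_deriv_le hp.le
    (hf'int t (t + 1) ht (by linarith)).aestronglyMeasurable
    (fun x y hx hxy _ => hAC x y (ht.trans hx) hxy) (hbound t ht)

end TranslationBounded

theorem norm_tendsto_zero_of_Lp_of_deriv_translation_bounded_general
    {X : Type*} [NormedAddCommGroup X] [NormedSpace ℝ X] [CompleteSpace X]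
    {τ p₁ : ℝ} {p₂ : ℝ≥0∞} (hp₁ : 0 < p₁) (hp₂ : 1 < p₂) {f f' : ℝ → X}
    (hf'int : ∀ a b : ℝ, τ ≤ a → a ≤ b → IntervalIntegrable f' volume a b)
    (hAC : ∀ a b : ℝ, τ ≤ a → a ≤ b → f b - f a = ∫ s in a..b, f' s)
    (hfLp : ∫⁻ s in Ioi τ, ENNReal.ofReal (‖f s‖ ^ p₁) < ∞)
    (htb : IsTranslationBounded f' p₂ τ) :
    Tendsto (fun t => ‖f t‖) atTop (nhds 0) := by
  have hunif : UniformContinuousOn f (Ici τ) :=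
    uniformContinuousOn_Ici_of_isTranslationBounded_deriv hp₂ hf'int hAC htb
  have hint : ∫⁻ s in Ioi τ, ‖f s‖ₑ ^ p₁ ≠ ∞ := by
    simpa only [← ofReal_norm, ENNReal.ofReal_rpow_of_nonneg (norm_nonneg _) hp₁.le] using hfLp.ne
  exact tendsto_zero_iff_norm_tendsto_zero.1
    (tendsto_atTop_zero_of_uniformContinuousOn_of_lintegral_rpow_ne_top hunif hp₁ hint)

/-- If `X` is a reflexive Banach space, `f ∈ L^{p₁}(τ,∞;X)` with `1 ≤ p₁ < ∞`, `f` is locally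
absolutely continuous with a.e. derivative `f'`, and `f'` is translation bounded in `L^{p₂}`
with `1 < p₂ ≤ ∞`, then `‖f(t)‖ → 0` as `t → ∞`. -/
theorem norm_tendsto_zero_of_Lp_of_deriv_translation_bounded
    {X : Type*} [NormedAddCommGroup X] [NormedSpace ℝ X] [CompleteSpace X]
    (hrefl : Function.Surjective (NormedSpace.inclusionInDoubleDual ℝ X))
    (τ : ℝ) (p₁ : ℝ) (p₂ : ℝ≥0∞) (hp₁ : 1 ≤ p₁) (hp₂ : 1 < p₂)
    (f f' : ℝ → X)
    (hf'int : ∀ a b : ℝ, τ ≤ a → a ≤ b → IntervalIntegrable f' volume a b)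
    (hAC : ∀ a b : ℝ, τ ≤ a → a ≤ b → f b - f a = ∫ s in a..b, f' s)
    (hfmeas : AEStronglyMeasurable f (volume.restrict (Ioi τ)))
    (hfLp : ∫⁻ s in Ioi τ, ENNReal.ofReal (‖f s‖ ^ p₁) < ⊤)
    (htb : ∃ C : ℝ≥0∞, C < ⊤ ∧
      ∀ t : ℝ, τ ≤ t → eLpNorm f' p₂ (volume.restrict (Ioc t (t + 1))) ≤ C) :
    Tendsto (fun t => ‖f t‖) atTop (nhds 0) := by
  exact norm_tendsto_zero_of_Lp_of_deriv_translation_bounded_general (zero_lt_one.trans_le hp₁) hp₂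
    hf'int hAC hfLp htb
end

section
/- Let τ ∈ ℝ and let Φ be an absolutely continuous nonnegative real-valued function on [τ,∞), and let ω₁, ω₂ be nonnegative locally integrable functions on [τ,∞) such that Φ'(t) ≤ ω₁(t)Φ(t) + ω₂(t) for almost every t ∈ [τ,∞). Assume there are nonnegative constants a₁, a₂, a₃ such that for all t ≥ τ: ∫_t^{t+1} ω₁(s) ds ≤ a₁, ∫_t^{t+1} ω₂(s) ds ≤ a₂, and ∫_t^{t+1} Φ(s) ds ≤ a₃. Then Φ(t+1) ≤ (a₂ + a₃) e^{a₁} for all t ≥ τ. -/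
open MeasureTheory Set

/-!
Multiplying `Φ' ≤ ω₁ Φ + ω₂` by the integrating factor `exp (-∫ ω₁)` and integrating from `s` to
`b` gives `Φ b * exp (-∫ ω₁) ≤ Φ s + ∫ ω₂`. When `0 ≤ Φ b`, enlarging both integrals to `[a, b]`
makes this hold with the same constants for every `s ∈ [a, b]`; averaging over `s` then replaces
the initial value of `Φ` by its mean.
-/

section AbsolutelyContinuous

variable {X Y : Type*} [PseudoMetricSpace X] [PseudoMetricSpace Y] {a b : ℝ}

lemma absolutelyContinuousOnInterval_of_dist_le_mul {f : ℝ → X} {g : ℝ → Y} {K : ℝ}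
    (hg : AbsolutelyContinuousOnInterval g a b)
    (hfg : ∀ x ∈ uIcc a b, ∀ y ∈ uIcc a b, dist (f x) (f y) ≤ K * dist (g x) (g y)) :
    AbsolutelyContinuousOnInterval f a b := by
  refine squeeze_zero' (.of_forall fun _ ↦ Finset.sum_nonneg fun _ _ ↦ dist_nonneg) ?_
    (by simpa only [mul_zero] using Filter.Tendsto.const_mul K hg)
  filter_upwards [Filter.mem_inf_of_right (Filter.mem_principal_self _)] with E hE
  rw [Finset.mul_sum]
  exact Finset.sum_le_sum fun i hi ↦ hfg _ (hE.1 i hi).1 _ (hE.1 i hi).2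

lemma absolutelyContinuousOnInterval_comp_of_locallyLipschitz {E : Type*}
    [SeminormedAddCommGroup E] {f : E → X} {g : ℝ → E} (hf : LocallyLipschitz f)
    (hg : AbsolutelyContinuousOnInterval g a b) :
    AbsolutelyContinuousOnInterval (fun x ↦ f (g x)) a b := by
  obtain ⟨K, hK⟩ := (hf.locallyLipschitzOn (s := g '' uIcc a b)).exists_lipschitzOnWith_of_compact
    (isCompact_uIcc.image_of_continuousOn hg.continuousOn)
  exact absolutelyContinuousOnInterval_of_dist_le_mul hg fun x hx y hy ↦
    hK.dist_le_mul _ (mem_image_of_mem g hx) _ (mem_image_of_mem g hy)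

lemma ae_hasDerivAt_of_sub_eq_integral {E : Type*} [NormedAddCommGroup E] [NormedSpace ℝ E]
    [CompleteSpace E] {f f' : ℝ → E} (hf' : IntervalIntegrable f' volume a b)
    (hf : ∀ x ∈ Icc a b, f x - f a = ∫ s in a..x, f' s) :
    ∀ᵐ x, x ∈ Ioo a b → HasDerivAt f (f' x) x := by
  filter_upwards [hf'.ae_hasDerivAt_integral] with x hderiv hx
  have hprim := (hderiv (Icc_subset_uIcc (Ioo_subset_Icc_self hx)) a left_mem_uIcc).const_add (f a)
  refine hprim.congr_of_eventuallyEq ?_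
  filter_upwards [Icc_mem_nhds hx.1 hx.2] with y hy
  rw [← hf y hy, add_sub_cancel]

variable {f f' g : ℝ → ℝ}

lemma absolutelyContinuousOnInterval_of_sub_eq_integral (hf' : IntervalIntegrable f' volume a b)
    (hf : ∀ x ∈ uIcc a b, f x - f a = ∫ s in a..x, f' s) :
    AbsolutelyContinuousOnInterval f a b := by
  refine absolutelyContinuousOnInterval_of_dist_le_mul (K := 1)
    (hf'.absolutelyContinuousOnInterval_intervalIntegral left_mem_uIcc) fun x hx y hy ↦ ?_
  rw [← hf x hx, ← hf y hy, dist_sub_right, one_mul]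

lemma sub_le_integral_of_ae_deriv_le (hab : a ≤ b) (hf : AbsolutelyContinuousOnInterval f a b)
    (hg : IntervalIntegrable g volume a b) (hfg : ∀ᵐ x, x ∈ Ioo a b → deriv f x ≤ g x) :
    f b - f a ≤ ∫ x in a..b, g x := by
  rw [← hf.integral_deriv_eq_sub]
  refine intervalIntegral.integral_mono_ae_restrict hab hf.intervalIntegrable_deriv hg ?_
  rw [← restrict_Ioo_eq_restrict_Icc]
  exact (ae_restrict_iff' measurableSet_Ioo).2 hfg

end AbsolutelyContinuous

section Gronwall

variable {Φ ω₁ ω₂ : ℝ → ℝ} {a b : ℝ}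

lemma mul_exp_neg_integral_le_add_integral_mul_exp (hab : a ≤ b)
    (hΦ : AbsolutelyContinuousOnInterval Φ a b)
    (hω₁ : IntervalIntegrable ω₁ volume a b) (hω₂ : IntervalIntegrable ω₂ volume a b)
    (hdiff : ∀ᵐ x, x ∈ Ioo a b → deriv Φ x ≤ ω₁ x * Φ x + ω₂ x) :
    Φ b * Real.exp (-∫ x in a..b, ω₁ x) ≤
      Φ a + ∫ x in a..b, ω₂ x * Real.exp (-∫ s in a..x, ω₁ s) := by
  set μ : ℝ → ℝ := fun x ↦ Real.exp (-∫ s in a..x, ω₁ s)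
  have hμ : AbsolutelyContinuousOnInterval μ a b :=
    absolutelyContinuousOnInterval_comp_of_locallyLipschitz Real.contDiff_exp.locallyLipschitz
      (hω₁.absolutelyContinuousOnInterval_intervalIntegral left_mem_uIcc).fun_neg
  have hderiv : ∀ᵐ x, x ∈ Ioo a b → deriv (fun y ↦ Φ y * μ y) x ≤ ω₂ x * μ x := by
    filter_upwards [hdiff, hΦ.ae_differentiableAt, hω₁.ae_hasDerivAt_integral]
      with x hle hΦx hω₁x hx
    have hx' : x ∈ uIcc a b := Icc_subset_uIcc (Ioo_subset_Icc_self hx)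
    have hμx : HasDerivAt μ (μ x * -ω₁ x) x := (hω₁x hx' a left_mem_uIcc).fun_neg.exp
    calc deriv (fun y ↦ Φ y * μ y) x
        = (deriv Φ x - ω₁ x * Φ x) * μ x := by
          rw [((hΦx hx').hasDerivAt.fun_mul hμx).deriv]; ring
      _ ≤ ω₂ x * μ x :=
          mul_le_mul_of_nonneg_right (sub_le_iff_le_add'.2 (hle hx)) (Real.exp_pos _).le
  have hμa : μ a = 1 := by simp [μ]
  have hincr := sub_le_integral_of_ae_deriv_le hab (hΦ.fun_mul hμ)
    (hω₂.mul_continuousOn hμ.continuousOn) hderiv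
  rwa [hμa, mul_one, sub_le_iff_le_add'] at hincr

lemma mul_exp_neg_integral_le_add_integral (hab : a ≤ b)
    (hΦ : AbsolutelyContinuousOnInterval Φ a b)
    (hω₁ : IntervalIntegrable ω₁ volume a b) (hω₂ : IntervalIntegrable ω₂ volume a b)
    (hω₁_nonneg : ∀ x ∈ Icc a b, 0 ≤ ω₁ x) (hω₂_nonneg : ∀ x ∈ Icc a b, 0 ≤ ω₂ x)
    (hdiff : ∀ᵐ x, x ∈ Ioo a b → deriv Φ x ≤ ω₁ x * Φ x + ω₂ x) :
    Φ b * Real.exp (-∫ x in a..b, ω₁ x) ≤ Φ a + ∫ x in a..b, ω₂ x := by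
  refine (mul_exp_neg_integral_le_add_integral_mul_exp hab hΦ hω₁ hω₂ hdiff).trans ?_
  have hcont : ContinuousOn (fun x ↦ Real.exp (-∫ s in a..x, ω₁ s)) (uIcc a b) :=
    (hω₁.absolutelyContinuousOnInterval_intervalIntegral left_mem_uIcc).continuousOn.neg.rexp
  gcongr
  refine intervalIntegral.integral_mono_on hab (hω₂.mul_continuousOn hcont) hω₂ fun x hx ↦ ?_
  refine mul_le_of_le_one_right (hω₂_nonneg x hx) (Real.exp_le_one_iff.2 (neg_nonpos.2 ?_))
  exact intervalIntegral.integral_nonneg hx.1 fun s hs ↦ hω₁_nonneg s ⟨hs.1, hs.2.trans hx.2⟩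

lemma mul_exp_neg_integral_le_add_integral_of_mem_Icc {s : ℝ} (hs : s ∈ Icc a b) (hΦb : 0 ≤ Φ b)
    (hΦ : AbsolutelyContinuousOnInterval Φ a b)
    (hω₁ : IntervalIntegrable ω₁ volume a b) (hω₂ : IntervalIntegrable ω₂ volume a b)
    (hω₁_nonneg : ∀ x ∈ Icc a b, 0 ≤ ω₁ x) (hω₂_nonneg : ∀ x ∈ Icc a b, 0 ≤ ω₂ x)
    (hdiff : ∀ᵐ x, x ∈ Ioo a b → deriv Φ x ≤ ω₁ x * Φ x + ω₂ x) :
    Φ b * Real.exp (-∫ x in a..b, ω₁ x) ≤ Φ s + ∫ x in a..b, ω₂ x := by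
  have hsub : uIcc s b ⊆ uIcc a b := uIcc_subset_uIcc_right (Icc_subset_uIcc hs)
  have hIcc : Icc s b ⊆ Icc a b := Icc_subset_Icc_left hs.1
  have integral_le {ω : ℝ → ℝ} (hω : IntervalIntegrable ω volume a b)
      (hω_nonneg : ∀ x ∈ Icc a b, 0 ≤ ω x) : ∫ x in s..b, ω x ≤ ∫ x in a..b, ω x :=
    intervalIntegral.integral_mono_interval hs.1 hs.2 le_rfl
      (ae_restrict_of_forall_mem measurableSet_Ioc fun x hx ↦ hω_nonneg x (Ioc_subset_Icc_self hx))
      hω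
  calc Φ b * Real.exp (-∫ x in a..b, ω₁ x)
      ≤ Φ b * Real.exp (-∫ x in s..b, ω₁ x) := by gcongr; exact integral_le hω₁ hω₁_nonneg
    _ ≤ Φ s + ∫ x in s..b, ω₂ x :=
        mul_exp_neg_integral_le_add_integral hs.2 (hΦ.mono hsub) (hω₁.mono_set hsub)
          (hω₂.mono_set hsub) (fun x hx ↦ hω₁_nonneg x (hIcc hx))
          (fun x hx ↦ hω₂_nonneg x (hIcc hx))
          (hdiff.mono fun x hle hx ↦ hle (Ioo_subset_Ioo_left hs.1 hx))
    _ ≤ Φ s + ∫ x in a..b, ω₂ x := by gcongr; exact integral_le hω₂ hω₂_nonneg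

theorem uniform_gronwall_general {Φ' : ℝ → ℝ} {a₁ a₂ a₃ : ℝ} (hab : a < b) (ha₃ : 0 ≤ a₃)
    (hΦ' : IntervalIntegrable Φ' volume a b)
    (hΦ : ∀ x ∈ Icc a b, Φ x - Φ a = ∫ s in a..x, Φ' s)
    (hω₁ : IntervalIntegrable ω₁ volume a b) (hω₂ : IntervalIntegrable ω₂ volume a b)
    (hω₁_nonneg : ∀ x ∈ Icc a b, 0 ≤ ω₁ x) (hω₂_nonneg : ∀ x ∈ Icc a b, 0 ≤ ω₂ x)
    (hdiff : ∀ᵐ x, x ∈ Ioo a b → Φ' x ≤ ω₁ x * Φ x + ω₂ x)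
    (hbd₁ : ∫ x in a..b, ω₁ x ≤ a₁) (hbd₂ : ∫ x in a..b, ω₂ x ≤ a₂)
    (hbd₃ : ∫ x in a..b, Φ x ≤ a₃) :
    Φ b ≤ (a₂ + a₃ / (b - a)) * Real.exp a₁ := by
  have hlen : 0 < b - a := sub_pos.2 hab
  have ha₂_nonneg : 0 ≤ a₂ := (intervalIntegral.integral_nonneg hab.le hω₂_nonneg).trans hbd₂
  rcases le_total (Φ b) 0 with hΦb | hΦb
  · exact hΦb.trans (by positivity)
  have hac : AbsolutelyContinuousOnInterval Φ a b :=
    absolutelyContinuousOnInterval_of_sub_eq_integral hΦ' (by rwa [uIcc_of_le hab.le])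
  have hderiv : ∀ᵐ x, x ∈ Ioo a b → deriv Φ x ≤ ω₁ x * Φ x + ω₂ x := by
    filter_upwards [hdiff, ae_hasDerivAt_of_sub_eq_integral hΦ' hΦ] with x hle hΦx hx
    exact (hΦx hx).deriv ▸ hle hx
  set c : ℝ := Φ b * Real.exp (-∫ x in a..b, ω₁ x) - ∫ x in a..b, ω₂ x
  have hc : ∀ s ∈ Icc a b, c ≤ Φ s := fun s hs ↦ sub_le_iff_le_add.2 <|
    mul_exp_neg_integral_le_add_integral_of_mem_Icc hs hΦb hac hω₁ hω₂ hω₁_nonneg hω₂_nonneg hderiv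
  have hmean : c ≤ a₃ / (b - a) := by
    rw [le_div_iff₀' hlen]
    calc (b - a) * c = ∫ _ in a..b, c := by rw [intervalIntegral.integral_const, smul_eq_mul]
      _ ≤ ∫ s in a..b, Φ s := intervalIntegral.integral_mono_on hab.le intervalIntegrable_const
          hac.continuousOn.intervalIntegrable hc
      _ ≤ a₃ := hbd₃
  calc Φ b = Φ b * Real.exp (-∫ x in a..b, ω₁ x) * Real.exp (∫ x in a..b, ω₁ x) := by
        rw [mul_assoc, ← Real.exp_add, neg_add_cancel, Real.exp_zero, mul_one]
    _ ≤ (a₂ + a₃ / (b - a)) * Real.exp a₁ := by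
        gcongr
        exact (sub_le_iff_le_add'.1 hmean).trans (by gcongr)

end Gronwall

/-- The uniform Gronwall lemma: if `Φ ≥ 0` is absolutely continuous on `[τ,∞)` with
`Φ' ≤ ω₁ Φ + ω₂` a.e., and the integrals of `ω₁, ω₂, Φ` over every interval `[t, t+1]`,
`t ≥ τ`, are bounded by `a₁, a₂, a₃` respectively, then `Φ(t+1) ≤ (a₂ + a₃) e^{a₁}`
for all `t ≥ τ`. -/
theorem uniform_gronwall
    (τ : ℝ) (Φ Φ' ω₁ ω₂ : ℝ → ℝ) (a₁ a₂ a₃ : ℝ)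
    (ha₁ : 0 ≤ a₁) (ha₂ : 0 ≤ a₂) (ha₃ : 0 ≤ a₃)
    (hΦnonneg : ∀ t : ℝ, τ ≤ t → 0 ≤ Φ t)
    (hΦ'int : ∀ a b : ℝ, τ ≤ a → a ≤ b → IntervalIntegrable Φ' volume a b)
    (hAC : ∀ a b : ℝ, τ ≤ a → a ≤ b → Φ b - Φ a = ∫ s in a..b, Φ' s)
    (hω₁nonneg : ∀ t : ℝ, τ ≤ t → 0 ≤ ω₁ t)
    (hω₂nonneg : ∀ t : ℝ, τ ≤ t → 0 ≤ ω₂ t)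
    (hω₁int : ∀ a b : ℝ, τ ≤ a → a ≤ b → IntervalIntegrable ω₁ volume a b)
    (hω₂int : ∀ a b : ℝ, τ ≤ a → a ≤ b → IntervalIntegrable ω₂ volume a b)
    (hΦint : ∀ a b : ℝ, τ ≤ a → a ≤ b → IntervalIntegrable Φ volume a b)
    (hdiff : ∀ᵐ t ∂(volume : Measure ℝ), τ ≤ t → Φ' t ≤ ω₁ t * Φ t + ω₂ t)
    (hbd₁ : ∀ t : ℝ, τ ≤ t → (∫ s in t..(t + 1), ω₁ s) ≤ a₁)
    (hbd₂ : ∀ t : ℝ, τ ≤ t → (∫ s in t..(t + 1), ω₂ s) ≤ a₂)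
    (hbd₃ : ∀ t : ℝ, τ ≤ t → (∫ s in t..(t + 1), Φ s) ≤ a₃) :
    ∀ t : ℝ, τ ≤ t → Φ (t + 1) ≤ (a₂ + a₃) * Real.exp a₁ := by
  intro t ht
  have mem {x : ℝ} (hx : x ∈ Icc t (t + 1)) : τ ≤ x := ht.trans hx.1
  have htt : t ≤ t + 1 := (lt_add_one t).le
  simpa only [add_sub_cancel_left, div_one] using uniform_gronwall_general (lt_add_one t) ha₃
    (hΦ'int t _ ht htt) (fun x hx ↦ hAC t x ht hx.1) (hω₁int t _ ht htt) (hω₂int t _ ht htt)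
    (fun x hx ↦ hω₁nonneg x (mem hx)) (fun x hx ↦ hω₂nonneg x (mem hx))
    (hdiff.mono fun x hle hx ↦ hle (mem (Ioo_subset_Icc_self hx))) (hbd₁ t ht) (hbd₂ t ht)
    (hbd₃ t ht)
end

section
/- Let t₀ ≥ 0, θ ∈ (0, 1/2], and c_ν, c_λ > 0. Let Φ : [t₀,∞) → [0,∞) be absolutely continuous with Φ(t) → 0 as t → ∞, and let D : [t₀,∞) → [0,∞) be measurable. Assume that for almost every t ≥ t₀ one has Φ'(t) ≤ −c_ν D(t)² and Φ(t)^{1−θ} ≤ c_λ D(t). Then D is integrable on [t₀,∞) and, for every t ≥ t₀, ∫_t^∞ D(s) ds ≤ (c_λ / (θ c_ν)) Φ(t)^θ. -/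
open MeasureTheory Set Filter

/-!
The function `C Φ ^ θ` with `C = clam / (θ * cν)` dominates the tails of `D`: wherever `Φ` is
positive the two differential inequalities combine to `D ≤ -(C Φ ^ θ)'`, and at a zero of `Φ`, which
is a minimum, both sides vanish. Since `s ↦ s ^ θ` is not Lipschitz near
`0`, the fundamental theorem of calculus for `Φ ^ θ` is replaced by the inequality
`∫ x in a..b, -f' x ≤ f a - f b`, which holds for every antitone `f`.
-/

section AntitoneDerivative

variable {f g : ℝ → ℝ} {a b m : ℝ}

theorem intervalIntegral_neg_deriv_le_sub_of_antitoneOn (hab : a ≤ b)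
    (hf : AntitoneOn f (Icc a b)) : ∫ x in a..b, -deriv f x ≤ f a - f b := by
  rw [← uIcc_of_le hab] at hf
  have hmem := hf.neg.intervalIntegral_deriv_mem_uIcc
  have hfab : f b ≤ f a := hf left_mem_uIcc right_mem_uIcc hab
  rw [uIcc_of_le (by simpa using hfab)] at hmem
  simpa [deriv.fun_neg, sub_eq_add_neg, add_comm] using hmem.2

theorem intervalIntegrable_neg_deriv_of_antitoneOn (hab : a ≤ b) (hf : AntitoneOn f (Icc a b)) :
    IntervalIntegrable (fun x ↦ -deriv f x) volume a b := by
  rw [← uIcc_of_le hab] at hf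
  simpa only [deriv.fun_neg'] using hf.neg.intervalIntegrable_deriv

theorem intervalIntegrable_of_le_neg_deriv (hab : a ≤ b) (hf : AntitoneOn f (Icc a b))
    (hg : AEStronglyMeasurable g (volume.restrict (Ioc a b)))
    (hg₀ : ∀ᵐ x ∂volume.restrict (Ioc a b), 0 ≤ g x)
    (hgf : ∀ᵐ x ∂volume.restrict (Ioc a b), g x ≤ -deriv f x) :
    IntervalIntegrable g volume a b := by
  rw [← uIoc_of_le hab] at hg hg₀ hgf
  refine (intervalIntegrable_neg_deriv_of_antitoneOn hab hf).mono_fun hg ?_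
  filter_upwards [hg₀, hgf] with x h₀ hle
  exact (Real.norm_of_nonneg h₀).trans_le (hle.trans (Real.le_norm_self _))

theorem intervalIntegral_le_sub_of_le_neg_deriv (hab : a ≤ b) (hf : AntitoneOn f (Icc a b))
    (hg : IntervalIntegrable g volume a b)
    (hgf : ∀ᵐ x ∂volume.restrict (Ioc a b), g x ≤ -deriv f x) :
    ∫ x in a..b, g x ≤ f a - f b := by
  refine le_trans ?_ (intervalIntegral_neg_deriv_le_sub_of_antitoneOn hab hf)
  simpa only [intervalIntegral.integral_of_le hab] using
    setIntegral_mono_ae_restrict hg.1 (intervalIntegrable_neg_deriv_of_antitoneOn hab hf).1 hgf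

theorem integrableOn_Ioi_and_integral_le_sub_of_le_neg_deriv (hf : AntitoneOn f (Ici a))
    (hm : ∀ x, a ≤ x → m ≤ f x) (hg : AEStronglyMeasurable g (volume.restrict (Ioi a)))
    (hg₀ : ∀ᵐ x ∂volume.restrict (Ioi a), 0 ≤ g x)
    (hgf : ∀ᵐ x ∂volume.restrict (Ioi a), g x ≤ -deriv f x) :
    IntegrableOn g (Ioi a) ∧ ∫ x in Ioi a, g x ≤ f a - m := by
  have hfb (b : ℝ) : AntitoneOn f (Icc a b) := hf.mono Icc_subset_Ici_self
  have hg₀b (b : ℝ) : ∀ᵐ x ∂volume.restrict (Ioc a b), 0 ≤ g x :=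
    ae_restrict_of_ae_restrict_of_subset Ioc_subset_Ioi_self hg₀
  have hgfb (b : ℝ) : ∀ᵐ x ∂volume.restrict (Ioc a b), g x ≤ -deriv f x :=
    ae_restrict_of_ae_restrict_of_subset Ioc_subset_Ioi_self hgf
  have hgint (b : ℝ) (hab : a ≤ b) : IntervalIntegrable g volume a b :=
    intervalIntegrable_of_le_neg_deriv hab (hfb b) (hg.mono_set Ioc_subset_Ioi_self)
      (hg₀b b) (hgfb b)
  have hbound : ∀ᶠ b in atTop, ∫ x in a..b, g x ≤ f a - m := by
    filter_upwards [eventually_ge_atTop a] with b hab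
    exact (intervalIntegral_le_sub_of_le_neg_deriv hab (hfb b) (hgint b hab) (hgfb b)).trans
      (sub_le_sub_left (hm b hab) _)
  have hint : IntegrableOn g (Ioi a) := by
    refine integrableOn_Ioi_of_intervalIntegral_norm_bounded (f a - m) a (fun b ↦ ?_) tendsto_id ?_
    · rcases le_total a b with hab | hba
      · exact (hgint b hab).1
      · simp [Ioc_eq_empty_of_le hba]
    · filter_upwards [hbound, eventually_ge_atTop a] with b hb hab
      refine (intervalIntegral.integral_congr_ae_restrict ?_).trans_le hb
      rw [id_eq, uIoc_of_le hab]
      exact (hg₀b b).mono fun x hx ↦ Real.norm_of_nonneg hx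
  exact ⟨hint, le_of_tendsto (intervalIntegral_tendsto_integral_Ioi a hint tendsto_id) hbound⟩

end AntitoneDerivative

theorem ae_hasDerivAt_of_sub_eq_intervalIntegral {E : Type*} [NormedAddCommGroup E]
    [NormedSpace ℝ E] [CompleteSpace E] {f f' : ℝ → E} {a : ℝ}
    (hf' : ∀ x y, a ≤ x → x ≤ y → IntervalIntegrable f' volume x y)
    (hff' : ∀ x y, a ≤ x → x ≤ y → f y - f x = ∫ s in x..y, f' s) :
    ∀ᵐ x, a < x → HasDerivAt f (f' x) x := by
  have hderiv : ∀ᵐ x, ∀ n : ℕ, x ∈ uIcc a (a + n) →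
      ∀ c ∈ uIcc a (a + n), HasDerivAt (fun y ↦ ∫ s in c..y, f' s) (f' x) x :=
    ae_all_iff.2 fun n ↦ (hf' a (a + n) le_rfl (by simp)).ae_hasDerivAt_integral
  filter_upwards [hderiv] with x hx hax
  obtain ⟨n, hn⟩ := exists_nat_ge (x - a)
  have hxn : x ∈ uIcc a (a + n) := mem_uIcc_of_le hax.le (by linarith)
  refine ((hx n hxn a left_mem_uIcc).const_add (f a)).congr_of_eventuallyEq ?_
  filter_upwards [Ioi_mem_nhds hax] with y (hay : a < y)
  rw [← hff' a y le_rfl hay.le, add_sub_cancel]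

theorem antitoneOn_of_sub_eq_intervalIntegral {f f' : ℝ → ℝ} {a : ℝ}
    (hff' : ∀ x y, a ≤ x → x ≤ y → f y - f x = ∫ s in x..y, f' s)
    (hf' : ∀ᵐ x, a < x → f' x ≤ 0) : AntitoneOn f (Ici a) := by
  intro x (hax : a ≤ x) y _ hxy
  rw [← sub_nonpos, hff' x y hax hxy, intervalIntegral.integral_of_le hxy]
  refine integral_nonpos_of_ae ((ae_restrict_iff' measurableSet_Ioc).2 ?_)
  exact hf'.mono fun s hs hsxy ↦ hs (hax.trans_lt hsxy.1)

section Lojasiewicz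

variable {θ cν clam : ℝ}

theorem le_mul_neg_rpow_sub_one_of_lojasiewicz {p v d : ℝ} (hθ : 0 < θ) (hcν : 0 < cν)
    (hclam : 0 < clam) (hp : 0 < p) (hv : v ≤ -cν * d ^ 2) (hd : p ^ (1 - θ) ≤ clam * d) :
    d ≤ clam / (θ * cν) * -(v * θ * p ^ (θ - 1)) := by
  have hd₀ : 0 ≤ d := nonneg_of_mul_nonneg_right ((Real.rpow_nonneg hp.le _).trans hd) hclam
  have hinv : p ^ (1 - θ) * p ^ (θ - 1) = 1 := by
    rw [← Real.rpow_add hp, sub_add_sub_cancel, sub_self, Real.rpow_zero]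
  calc d = d * (p ^ (1 - θ) * p ^ (θ - 1)) := by rw [hinv, mul_one]
    _ ≤ d * (clam * d * p ^ (θ - 1)) := by gcongr
    _ = clam / (θ * cν) * (cν * d ^ 2 * θ * p ^ (θ - 1)) := by field_simp
    _ ≤ clam / (θ * cν) * (-v * θ * p ^ (θ - 1)) := by gcongr; linarith
    _ = clam / (θ * cν) * -(v * θ * p ^ (θ - 1)) := by ring

theorem le_neg_deriv_rpow_of_lojasiewicz {Φ : ℝ → ℝ} {x d : ℝ} (hθ : 0 < θ) (hcν : 0 < cν)
    (hclam : 0 < clam) (hΦ : ∀ᶠ y in nhds x, 0 ≤ Φ y) (hderiv : deriv Φ x ≤ -cν * d ^ 2)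
    (hd : Φ x ^ (1 - θ) ≤ clam * d) :
    d ≤ -deriv (fun y ↦ clam / (θ * cν) * Φ y ^ θ) x := by
  rcases hΦ.self_of_nhds.eq_or_lt with hzero | hpos
  · have hmin : IsLocalMin Φ x := hΦ.mono fun y hy ↦ hzero ▸ hy
    have hmin_rpow : IsLocalMin (fun y ↦ clam / (θ * cν) * Φ y ^ θ) x := by
      filter_upwards [hΦ] with y hy
      rw [← hzero, Real.zero_rpow hθ.ne', mul_zero]
      positivity
    have hd₀ : d = 0 := by
      rw [hmin.deriv_eq_zero] at hderiv
      exact pow_eq_zero_iff two_ne_zero |>.1 (by nlinarith [sq_nonneg d])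
    rw [hmin_rpow.deriv_eq_zero, hd₀, neg_zero]
  · have hd₀ : 0 < d := pos_of_mul_pos_right ((Real.rpow_pos_of_pos hpos _).trans_le hd) hclam.le
    have hderiv_neg : deriv Φ x < 0 :=
      hderiv.trans_lt (by rw [neg_mul, neg_lt_zero]; positivity)
    have hΦx : HasDerivAt Φ (deriv Φ x) x :=
      (differentiableAt_of_deriv_ne_zero hderiv_neg.ne).hasDerivAt
    rw [((hΦx.rpow_const (Or.inl hpos.ne')).const_mul _).deriv, ← mul_neg]
    exact le_mul_neg_rpow_sub_one_of_lojasiewicz hθ hcν hclam hpos hderiv hd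

theorem integrable_and_tail_bound_of_lojasiewicz_general {t₀ : ℝ} {Φ D : ℝ → ℝ}
    (hθ : θ ∈ Ioo (0 : ℝ) 1) (hcν : 0 < cν) (hclam : 0 < clam)
    (hΦ₀ : ∀ t, t₀ ≤ t → 0 ≤ Φ t) (hΦ : AntitoneOn Φ (Ici t₀))
    (hD : AEStronglyMeasurable D (volume.restrict (Ioi t₀)))
    (hdiff : ∀ᵐ t, t₀ < t → deriv Φ t ≤ -cν * D t ^ 2 ∧ Φ t ^ (1 - θ) ≤ clam * D t) :
    IntegrableOn D (Ici t₀) ∧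
      ∀ t, t₀ ≤ t → ∫ s in Ioi t, D s ≤ clam / (θ * cν) * Φ t ^ θ := by
  have hθ₀ : 0 < θ := hθ.1
  have hanti : AntitoneOn (fun t ↦ clam / (θ * cν) * Φ t ^ θ) (Ici t₀) := by
    intro s hs t ht hst
    have := hΦ₀ t ht
    have := hΦ hs ht hst
    dsimp only
    gcongr
  have hD₀ : ∀ᵐ t ∂volume.restrict (Ioi t₀), 0 ≤ D t := by
    rw [ae_restrict_iff' measurableSet_Ioi]
    filter_upwards [hdiff] with t ht (htt₀ : t₀ < t)
    exact nonneg_of_mul_nonneg_right ((Real.rpow_nonneg (hΦ₀ t htt₀.le) _).trans (ht htt₀).2) hclam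
  have hle : ∀ᵐ t ∂volume.restrict (Ioi t₀),
      D t ≤ -deriv (fun s ↦ clam / (θ * cν) * Φ s ^ θ) t := by
    rw [ae_restrict_iff' measurableSet_Ioi]
    filter_upwards [hdiff] with t ht (htt₀ : t₀ < t)
    have hΦt : ∀ᶠ s in nhds t, 0 ≤ Φ s :=
      (eventually_gt_nhds htt₀).mono fun s hs ↦ hΦ₀ s hs.le
    exact le_neg_deriv_rpow_of_lojasiewicz hθ₀ hcν hclam hΦt (ht htt₀).1 (ht htt₀).2
  have htail (t : ℝ) (ht : t₀ ≤ t) :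
      IntegrableOn D (Ioi t) ∧ ∫ s in Ioi t, D s ≤ clam / (θ * cν) * Φ t ^ θ - 0 := by
    have hsub : Ioi t ⊆ Ioi t₀ := Ioi_subset_Ioi ht
    refine integrableOn_Ioi_and_integral_le_sub_of_le_neg_deriv (hanti.mono (Ici_subset_Ici.2 ht))
      (fun s hs ↦ ?_) (hD.mono_set hsub) (ae_restrict_of_ae_restrict_of_subset hsub hD₀)
      (ae_restrict_of_ae_restrict_of_subset hsub hle)
    have := hΦ₀ s (ht.trans hs)
    positivity
  exact ⟨(integrableOn_Ici_iff_integrableOn_Ioi).2 (htail t₀ le_rfl).1,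
    fun t ht ↦ (htail t ht).2.trans_eq (sub_zero _)⟩

end Lojasiewicz

/-- The key integration step in the Łojasiewicz–Simon convergence argument: if `Φ ≥ 0` is
absolutely continuous with `Φ(t) → 0` as `t → ∞`, `D ≥ 0` is measurable, and a.e. on `[t₀,∞)`
one has `Φ' ≤ −c_ν D²` and `Φ^{1−θ} ≤ c_λ D`, then `D` is integrable on `[t₀,∞)` and
`∫_t^∞ D ≤ (c_λ/(θ c_ν)) Φ(t)^θ` for every `t ≥ t₀`. -/
theorem integrable_and_tail_bound_of_lojasiewicz
    (t₀ θ cν clam : ℝ) (ht₀ : 0 ≤ t₀) (hθ : θ ∈ Ioc (0 : ℝ) (1 / 2))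
    (hcν : 0 < cν) (hclam : 0 < clam)
    (Φ Φ' D : ℝ → ℝ)
    (hΦnonneg : ∀ t : ℝ, t₀ ≤ t → 0 ≤ Φ t)
    (hDnonneg : ∀ t : ℝ, t₀ ≤ t → 0 ≤ D t)
    (hDmeas : Measurable D)
    (hΦ'int : ∀ a b : ℝ, t₀ ≤ a → a ≤ b → IntervalIntegrable Φ' volume a b)
    (hAC : ∀ a b : ℝ, t₀ ≤ a → a ≤ b → Φ b - Φ a = ∫ s in a..b, Φ' s)
    (hΦ0 : Tendsto Φ atTop (nhds 0))
    (hdiff : ∀ᵐ t ∂(volume : Measure ℝ), t₀ ≤ t →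
      Φ' t ≤ -cν * D t ^ 2 ∧ Φ t ^ (1 - θ) ≤ clam * D t) :
    IntegrableOn D (Ici t₀) ∧
      ∀ t : ℝ, t₀ ≤ t → (∫ s in Ioi t, D s) ≤ (clam / (θ * cν)) * Φ t ^ θ := by
  have hΦ'nonpos : ∀ᵐ t, t₀ < t → Φ' t ≤ 0 := by
    filter_upwards [hdiff] with t ht htt₀
    exact (ht htt₀.le).1.trans (mul_nonpos_of_nonpos_of_nonneg (neg_nonpos.2 hcν.le) (sq_nonneg _))
  refine integrable_and_tail_bound_of_lojasiewicz_general
    ⟨hθ.1, hθ.2.trans_lt (by norm_num)⟩ hcν hclam hΦnonneg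
    (antitoneOn_of_sub_eq_intervalIntegral hAC hΦ'nonpos) hDmeas.aestronglyMeasurable ?_
  filter_upwards [ae_hasDerivAt_of_sub_eq_intervalIntegral hΦ'int hAC, hdiff] with t hΦt ht htt₀
  exact (hΦt htt₀).deriv.symm ▸ ht htt₀.le
end
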